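/- arXiv:2403.19673 — 3 statements merged into one kernel-verified Lean document; each statement's English description precedes it below -/
import Mathlib

section
/- Let D ⊆ ℝ², let P₀ = (x₀, y₀) be an accumulation point of D, let f : ℝ² → ℝ and L ∈ ℝ. Then f(P) → L as P → P₀ within D (i.e., the limit of f at P₀ along D \ {P₀} is L) if and only if: for every constant φ₀ ∈ [0, 2π] and every pair of sequences (rₙ) and (φₙ) of real numbers with rₙ > 0, rₙ → 0 and φₙ → φ₀, such that every point Pₙ = (x₀ + rₙ·cos φₙ, y₀ + rₙ·sin φₙ) lies in D, the sequence f(Pₙ) converges to L. -/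
/-!
The forward direction holds because `Pₙ → P₀` with `Pₙ ≠ P₀`. For the converse, the limit along
`𝓝[D \ {P₀}] P₀` may be tested on sequences, and it suffices to find for every sequence in
`D \ {P₀}` converging to `P₀` a subsequence along which `f → L`. Writing the sequence in polar
coordinates with angles in the compact interval `[0, 2π]` (`exists_polar`), a subsequence of the
angles converges to some `φ₀ ∈ [0, 2π]`, and the hypothesis applies to it.
-/

open Filter Topology Real

/-- A point of the Euclidean plane given by its two coordinates. -/
noncomputable def pt (x y : ℝ) : EuclideanSpace ℝ (Fin 2) :=
  (EuclideanSpace.equiv (Fin 2) ℝ).symm ![x, y]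

lemma continuous_pt : Continuous fun p : ℝ × ℝ => pt p.1 p.2 := by
  unfold pt
  refine (EuclideanSpace.equiv (Fin 2) ℝ).symm.continuous.comp ?_
  refine continuous_pi fun i => ?_
  fin_cases i
  · exact continuous_fst
  · exact continuous_snd

lemma pt_zero (x y : ℝ) : pt x y 0 = x := rfl

lemma pt_one (x y : ℝ) : pt x y 1 = y := rfl

lemma pt_eta (P : EuclideanSpace ℝ (Fin 2)) : pt (P 0) (P 1) = P := by
  ext i
  fin_cases i <;> rfl

lemma exists_polar (x₀ y₀ : ℝ) (P : EuclideanSpace ℝ (Fin 2)) (hP : P ≠ pt x₀ y₀) :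
    ∃ r φ : ℝ, 0 < r ∧ r = dist P (pt x₀ y₀) ∧ φ ∈ Set.Icc (0 : ℝ) (2 * π) ∧
      pt (x₀ + r * Real.cos φ) (y₀ + r * Real.sin φ) = P := by
  set z : ℂ := ⟨P 0 - x₀, P 1 - y₀⟩ with hz
  have hr : ‖z‖ = dist P (pt x₀ y₀) := by
    rw [EuclideanSpace.dist_eq, Fin.sum_univ_two, Complex.norm_eq_sqrt_sq_add_sq,
      Real.dist_eq, Real.dist_eq, sq_abs, sq_abs, pt_zero, pt_one]
  have hc : ‖z‖ * Real.cos z.arg = P 0 - x₀ := Complex.norm_mul_cos_arg z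
  have hs : ‖z‖ * Real.sin z.arg = P 1 - y₀ := Complex.norm_mul_sin_arg z
  have hpos : 0 < ‖z‖ := hr ▸ dist_pos.mpr hP
  have hlo := Complex.neg_pi_lt_arg z
  have hhi := Complex.arg_le_pi z
  have hpi := Real.pi_pos
  -- `Complex.arg` takes values in `(-π, π]`; negative values are shifted by `2π`.
  rcases le_or_gt 0 z.arg with h | h
  · refine ⟨‖z‖, z.arg, hpos, hr, ⟨h, by linarith⟩, ?_⟩
    rw [hc, hs, add_sub_cancel, add_sub_cancel, pt_eta]
  · refine ⟨‖z‖, z.arg + 2 * π, hpos, hr, ⟨by linarith, by linarith⟩, ?_⟩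
    rw [Real.cos_add_two_pi, Real.sin_add_two_pi, hc, hs, add_sub_cancel, add_sub_cancel, pt_eta]

/-- **Theorem 1.** For `D ⊆ ℝ²`, an accumulation point `P₀ = (x₀, y₀)` of `D`,
`f : ℝ² → ℝ` and `L ∈ ℝ`: the limit of `f` at `P₀` within `D` is `L` iff for every
`φ₀ ∈ [0, 2π]` and sequences `rₙ > 0`, `rₙ → 0`, `φₙ → φ₀` such that each point
`Pₙ = (x₀ + rₙ cos φₙ, y₀ + rₙ sin φₙ)` lies in `D`, one has `f (Pₙ) → L`. -/
theorem stmt_0 (D : Set (EuclideanSpace ℝ (Fin 2))) (x₀ y₀ : ℝ)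
    (hacc : AccPt (pt x₀ y₀) (𝓟 D)) (f : EuclideanSpace ℝ (Fin 2) → ℝ) (L : ℝ) :
    Tendsto f (𝓝[D \ {pt x₀ y₀}] (pt x₀ y₀)) (𝓝 L) ↔
      ∀ φ₀ ∈ Set.Icc (0 : ℝ) (2 * π), ∀ r φ : ℕ → ℝ,
        (∀ n, 0 < r n) → Tendsto r atTop (𝓝 0) → Tendsto φ atTop (𝓝 φ₀) →
        (∀ n, pt (x₀ + r n * Real.cos (φ n)) (y₀ + r n * Real.sin (φ n)) ∈ D) →
        Tendsto (fun n => f (pt (x₀ + r n * Real.cos (φ n)) (y₀ + r n * Real.sin (φ n))))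
          atTop (𝓝 L) := by
  constructor
  · intro h φ₀ _ r φ hr hr0 hφ hD
    refine h.comp (tendsto_nhdsWithin_iff.mpr ⟨?_, Eventually.of_forall fun n => ⟨hD n, ?_⟩⟩)
    · have h1 : Tendsto (fun n => x₀ + r n * Real.cos (φ n)) atTop (𝓝 x₀) := by
        simpa using (hr0.mul ((Real.continuous_cos.tendsto φ₀).comp hφ)).const_add x₀
      have h2 : Tendsto (fun n => y₀ + r n * Real.sin (φ n)) atTop (𝓝 y₀) := by
        simpa using (hr0.mul ((Real.continuous_sin.tendsto φ₀).comp hφ)).const_add y₀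
      exact (continuous_pt.tendsto (x₀, y₀)).comp (h1.prodMk_nhds h2)
    · intro he
      have he' : pt (x₀ + r n * Real.cos (φ n)) (y₀ + r n * Real.sin (φ n)) = pt x₀ y₀ := he
      have e0 := congrArg (fun P : EuclideanSpace ℝ (Fin 2) => P 0) he'
      have e1 := congrArg (fun P : EuclideanSpace ℝ (Fin 2) => P 1) he'
      simp only [pt_zero, pt_one, add_eq_left, mul_eq_zero, (hr n).ne', false_or] at e0 e1
      have := Real.sin_sq_add_cos_sq (φ n)
      simp [e0, e1] at this
  · intro h
    refine tendsto_of_subseq_tendsto fun u hu => ?_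
    obtain ⟨hu0, hmem⟩ := tendsto_nhdsWithin_iff.mp hu
    obtain ⟨N, hN⟩ := eventually_atTop.mp hmem
    -- The tail `u (n + N)` lies entirely in `D \ {P₀}`.
    choose r φ hr hrd hφ hP using fun n =>
      exists_polar x₀ y₀ (u (n + N)) (hN (n + N) (Nat.le_add_left N n)).2
    obtain ⟨φ₀, hφ₀, k, hk, hlim⟩ := isCompact_Icc.tendsto_subseq hφ
    have hr0 : Tendsto r atTop (𝓝 0) := by
      rw [funext hrd]
      exact (tendsto_iff_dist_tendsto_zero.mp hu0).comp (tendsto_add_atTop_nat N)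
    refine ⟨fun n => k n + N, ?_⟩
    have := h φ₀ hφ₀ (r ∘ k) (φ ∘ k) (fun n => hr _) (hr0.comp hk.tendsto_atTop) hlim
      (fun n => by
        simp only [Function.comp_apply, hP]
        exact (hN _ (Nat.le_add_left N _)).1)
    simpa only [Function.comp_apply, hP] using this
end

section
/- Let P₀, P, Q be three pairwise distinct points of the Euclidean plane ℝ². If the angle ∠(P, P₀, Q) at vertex P₀ is at most π/4 and dist(P₀, P) > 2·dist(P₀, Q), then the angle ∠(P, Q, P₀) at vertex Q is obtuse, i.e., ∠(P, Q, P₀) > π/2. -/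
/-! Put `x = P - P₀` and `y = Q - P₀`. The angle at `Q` is obtuse iff
`⟪x - y, -y⟫ = ‖y‖² - ⟪x, y⟫` is negative. Since `cos (π / 4) = √2 / 2 > 1 / 2`, the hypotheses
give `⟪x, y⟫ ≥ ‖x‖ ‖y‖ / 2 > ‖y‖²`. -/

open Real EuclideanGeometry

/-- If `P₀, P, Q` are pairwise distinct points of the Euclidean plane, the angle
`∠ P P₀ Q` at vertex `P₀` is at most `π/4`, and `dist P₀ P > 2 * dist P₀ Q`, then the
angle `∠ P Q P₀` at vertex `Q` is obtuse. -/
theorem stmt_3 (P₀ P Q : EuclideanSpace ℝ (Fin 2))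
    (h₁ : P₀ ≠ P) (h₂ : P₀ ≠ Q) (h₃ : P ≠ Q)
    (hangle : ∠ P P₀ Q ≤ π / 4) (hdist : dist P₀ P > 2 * dist P₀ Q) :
    ∠ P Q P₀ > π / 2 := by
  have hcos : 1 / 2 ≤ Real.cos (∠ P P₀ Q) := by
    have h := Real.cos_le_cos_of_nonneg_of_le_pi (EuclideanGeometry.angle_nonneg P P₀ Q)
      (by linarith [Real.pi_pos]) hangle
    rw [Real.cos_pi_div_four] at h
    have : (1 : ℝ) ≤ √2 := Real.one_le_sqrt.mpr (by norm_num)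
    linarith
  have hin := InnerProductGeometry.cos_angle_mul_norm_mul_norm (P -ᵥ P₀) (Q -ᵥ P₀)
  have hx : ‖P -ᵥ P₀‖ = dist P₀ P := by rw [dist_comm, dist_eq_norm_vsub]
  have hy : ‖Q -ᵥ P₀‖ = dist P₀ Q := by rw [dist_comm, dist_eq_norm_vsub]
  have hpos : 0 < dist P₀ Q := dist_pos.mpr h₂
  by_contra! hle
  have hcosQ : 0 ≤ Real.cos (∠ P Q P₀) := Real.cos_nonneg_of_neg_pi_div_two_le_of_le
    (by linarith [Real.pi_pos, EuclideanGeometry.angle_nonneg P Q P₀]) hle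
  have hinQ := InnerProductGeometry.cos_angle_mul_norm_mul_norm (P -ᵥ Q) (P₀ -ᵥ Q)
  have hnonneg : 0 ≤ inner ℝ (P -ᵥ Q) (P₀ -ᵥ Q) := by
    rw [← hinQ]
    exact mul_nonneg hcosQ (by positivity)
  have hexp : inner ℝ (P -ᵥ Q) (P₀ -ᵥ Q)
      = ‖Q -ᵥ P₀‖ ^ 2 - inner ℝ (P -ᵥ P₀) (Q -ᵥ P₀) := by
    rw [← vsub_sub_vsub_cancel_right P Q P₀, ← neg_vsub_eq_vsub_rev Q P₀, inner_neg_right,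
      inner_sub_left, real_inner_self_eq_norm_sq]
    ring
  rw [hexp, ← hin, hx, hy] at hnonneg
  change 0 ≤ _ - Real.cos (∠ P P₀ Q) * _ at hnonneg
  have hmul : 1 / 2 * (dist P₀ P * dist P₀ Q)
      ≤ Real.cos (∠ P P₀ Q) * (dist P₀ P * dist P₀ Q) :=
    mul_le_mul_of_nonneg_right hcos (by positivity)
  nlinarith
end

section
/- Let P₀, P, Q be three pairwise distinct points of the Euclidean plane ℝ². If the angle ∠(P, P₀, Q) at vertex P₀ is at most π/4 and dist(P₀, P) > 2·dist(P₀, Q), then the distance from P₀ to the point (1 − t)·P + t·Q on the segment from P to Q is strictly decreasing as a function of t ∈ [0, 1]. -/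
/-!
Put `u = P - P₀`, `v = Q - P₀`. The angle bound gives `⟪u, v⟫ ≥ (√2 / 2) ‖u‖ ‖v‖`, and with
`‖u‖ > 2 ‖v‖ > 0` this exceeds `‖v‖²`: the angle `∠ P₀ Q P` is obtuse, so the foot of
the perpendicular from `P₀` to the line `PQ` lies strictly beyond `Q`. Quantitatively, writing
`f t = ‖(1 - t) u + t v‖²`, one has
`f s - f t = (t - s) (2 (⟪u, v⟫ - ‖v‖²) + (2 - s - t) ‖u - v‖²)`,
which is positive for `s < t` in `[0, 1]`.
-/

open Real EuclideanGeometry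

lemma norm_sq_lt_inner_of_angle_le {V : Type*} [NormedAddCommGroup V] [InnerProductSpace ℝ V]
    {u v : V} (hv : v ≠ 0) (hangle : InnerProductGeometry.angle u v ≤ π / 4)
    (huv : 2 * ‖v‖ < ‖u‖) : ‖v‖ ^ 2 < inner ℝ u v := by
  have hv' : 0 < ‖v‖ := norm_pos_iff.2 hv
  have hcos : √2 / 2 ≤ Real.cos (InnerProductGeometry.angle u v) := by
    rw [← Real.cos_pi_div_four]
    exact Real.cos_le_cos_of_nonneg_of_le_pi (InnerProductGeometry.angle_nonneg u v)
      (by linarith [Real.pi_pos]) hangle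
  have h2 : 1 < √2 := Real.lt_sqrt_of_sq_lt (by norm_num)
  rw [← InnerProductGeometry.cos_angle_mul_norm_mul_norm u v]
  calc ‖v‖ ^ 2 = 1 / 2 * (2 * ‖v‖ * ‖v‖) := by ring
    _ < 1 / 2 * (‖u‖ * ‖v‖) := by gcongr
    _ ≤ Real.cos (InnerProductGeometry.angle u v) * (‖u‖ * ‖v‖) := by
      gcongr
      linarith

/-- If `P₀, P, Q` are pairwise distinct points of the Euclidean plane, the angle
`∠ P P₀ Q` at vertex `P₀` is at most `π/4`, and `dist P₀ P > 2 * dist P₀ Q`, then the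
distance from `P₀` to the point `(1 - t) • P + t • Q` of the segment from `P` to `Q`
is strictly decreasing as a function of `t ∈ [0, 1]`. -/
theorem stmt_4 (P₀ P Q : EuclideanSpace ℝ (Fin 2))
    (h₁ : P₀ ≠ P) (h₂ : P₀ ≠ Q) (h₃ : P ≠ Q)
    (hangle : ∠ P P₀ Q ≤ π / 4) (hdist : dist P₀ P > 2 * dist P₀ Q) :
    StrictAntiOn (fun t : ℝ => dist P₀ ((1 - t) • P + t • Q)) (Set.Icc 0 1) := by
  have key : ‖Q - P₀‖ ^ 2 < inner ℝ (P - P₀) (Q - P₀) := by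
    refine norm_sq_lt_inner_of_angle_le (sub_ne_zero.2 h₂.symm) hangle ?_
    rwa [dist_comm P₀ P, dist_comm P₀ Q, dist_eq_norm, dist_eq_norm] at hdist
  have hd (t : ℝ) : dist P₀ ((1 - t) • P + t • Q) = ‖(1 - t) • (P - P₀) + t • (Q - P₀)‖ := by
    rw [dist_comm, dist_eq_norm]
    congr 1
    module
  intro s hs t ht hst
  simp only [hd]
  generalize P - P₀ = u at key
  generalize Q - P₀ = v at key
  have hsq (r : ℝ) : ‖(1 - r) • u + r • v‖ ^ 2
      = (1 - r) ^ 2 * ‖u‖ ^ 2 + 2 * r * (1 - r) * inner ℝ u v + r ^ 2 * ‖v‖ ^ 2 := by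
    rw [norm_add_sq_real, norm_smul, norm_smul, inner_smul_left, inner_smul_right, mul_pow, mul_pow,
      Real.norm_eq_abs, Real.norm_eq_abs, sq_abs, sq_abs]
    simp only [conj_trivial]
    ring
  refine lt_of_pow_lt_pow_left₀ 2 (norm_nonneg _) ?_
  rw [← sub_pos]
  have hdiff : ‖(1 - s) • u + s • v‖ ^ 2 - ‖(1 - t) • u + t • v‖ ^ 2
      = (t - s) * (2 * (inner ℝ u v - ‖v‖ ^ 2) + (2 - s - t) * ‖u - v‖ ^ 2) := by
    rw [hsq, hsq, norm_sub_sq_real]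
    ring
  rw [hdiff]
  have hst2 : 0 ≤ 2 - s - t := by linarith [hs.2, ht.2]
  exact mul_pos (sub_pos.2 hst)
    (add_pos_of_pos_of_nonneg (by linarith) (mul_nonneg hst2 (sq_nonneg _)))
end
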